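/- Let k(y₁,y₂) = ψ(y₁ − y₂) be a translation-invariant kernel on ℝ^m for a continuous positive-definite function ψ : ℝ^m → (0,∞) with ψ(0) = 1, and let ν be the probability measure on ℝ^m with ψ = ν̂ (the Fourier transform ν̂(x) = ∫ e^{−i⟨x,z⟩} dν(z)), guaranteed by Bochner's theorem. Let f : ℝ^m × X → [0,1] be a probability density kernel, with f̂(z;x) = ∫ e^{−i⟨z,y⟩} f(y;x) dy its Fourier transform in the first argument. Then the updated kernel k_f(x₁,x₂) := ∬ k(y₁,y₂) f(y₁;x₁) f(y₂;x₂) dy₁ dy₂ equals k_f(x₁,x₂) = ∫_{ℝ^m} f̂(z;x₁) · conj(f̂(z;x₂)) dν(z) = ⟨f̂(·;x₁), f̂(·;x₂)⟩_{L²(ν;ℂ)}. -/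

import Mathlib

/-!
The identity is Fubini's theorem. Substituting `ψ(y₁ - y₂) = ∫ e^{-i⟨y₁ - y₂, w⟩} dν(w)` writes the
updated kernel as an integral of `e^{-i⟨y₁ - y₂, w⟩} f(y₁;x₁) f(y₂;x₂)` over `(y₁, y₂)` and `w`.
The character has modulus one, `ν` is finite and `f(·;x₁) ⊗ f(·;x₂)` is integrable, so the triple
integral converges absolutely (`integrable_char_mul_density`). Integrating over `(y₁, y₂)` first,
the character splits as `e^{-i⟨w, y₁⟩}` times the conjugate of `e^{-i⟨w, y₂⟩}`, and the double
integral factors as `f̂(w;x₁)` times the conjugate of `f̂(w;x₂)`.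
-/

open MeasureTheory ProbabilityTheory Filter
open scoped RealInnerProductSpace ENNReal NNReal

noncomputable section

/-- A positive-definite function `k`. -/
def IsPosDef {X : Type*} (k : X → X → ℝ) : Prop :=
  ∀ (n : ℕ) (x : Fin n → X) (c : Fin n → ℝ),
    0 ≤ ∑ i : Fin n, ∑ j : Fin n, c i * c j * k (x i) (x j)

/-- A bounded, measurable, symmetric, positive-definite kernel. -/
structure IsKernel {X : Type*} [MeasurableSpace X] (k : X → X → ℝ) : Prop where
  measurable : Measurable (Function.uncurry k)
  bounded : ∃ C : ℝ, ∀ x y, |k x y| ≤ C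
  symm : ∀ x y, k x y = k y x
  posDef : IsPosDef k

/-- A realization of the reproducing kernel Hilbert space of `k`: a Hilbert space together with
a feature map reproducing `k` whose feature vectors span a dense subspace. -/
structure FeatureMap {X : Type*} [MeasurableSpace X] (k : X → X → ℝ)
    (H : Type*) [NormedAddCommGroup H] [InnerProductSpace ℝ H] : Type _ where
  toFun : X → H
  stronglyMeasurable : StronglyMeasurable toFun
  repro : ∀ x y, ⟪toFun x, toFun y⟫ = k x y
  dense_span : Dense (Submodule.span ℝ (Set.range toFun) : Set H)

/-- Kernel mean embedding of a measure, as a Bochner integral of the feature map. -/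
def meanEmb {X : Type*} [MeasurableSpace X] {k : X → X → ℝ} {H : Type*}
    [NormedAddCommGroup H] [InnerProductSpace ℝ H] [CompleteSpace H]
    (F : FeatureMap k H) (μ : Measure X) : H :=
  ∫ x, F.toFun x ∂μ

/-- Kernel covariance of two random probability measures,
`Cov_k(P₁,P₂) = E[⟪μ_k(P₁) - E[μ_k(P₁)], μ_k(P₂) - E[μ_k(P₂)]⟫]`. -/
def kerCov {X : Type*} [MeasurableSpace X] {k : X → X → ℝ} {H : Type*}
    [NormedAddCommGroup H] [InnerProductSpace ℝ H] [CompleteSpace H]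
    {Ω : Type*} [MeasurableSpace Ω]
    (F : FeatureMap k H) (Pr : Measure Ω) (P₁ P₂ : Ω → Measure X) : ℝ :=
  ∫ ω, ⟪meanEmb F (P₁ ω) - ∫ ω', meanEmb F (P₁ ω') ∂Pr,
        meanEmb F (P₂ ω) - ∫ ω', meanEmb F (P₂ ω') ∂Pr⟫ ∂Pr

/-- Kernel variance of a random probability measure. -/
def kerVar {X : Type*} [MeasurableSpace X] {k : X → X → ℝ} {H : Type*}
    [NormedAddCommGroup H] [InnerProductSpace ℝ H] [CompleteSpace H]
    {Ω : Type*} [MeasurableSpace Ω]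
    (F : FeatureMap k H) (Pr : Measure Ω) (P : Ω → Measure X) : ℝ :=
  kerCov F Pr P P

/-- Kernel correlation of two random probability measures. -/
def kerCorr {X : Type*} [MeasurableSpace X] {k : X → X → ℝ} {H : Type*}
    [NormedAddCommGroup H] [InnerProductSpace ℝ H] [CompleteSpace H]
    {Ω : Type*} [MeasurableSpace Ω]
    (F : FeatureMap k H) (Pr : Measure Ω) (P₁ P₂ : Ω → Measure X) : ℝ :=
  kerCov F Pr P₁ P₂ / (Real.sqrt (kerVar F Pr P₁) * Real.sqrt (kerVar F Pr P₂))

/-- Covariance of two real random variables. -/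
def rCov {Ω : Type*} [MeasurableSpace Ω] (Pr : Measure Ω) (U V : Ω → ℝ) : ℝ :=
  ∫ ω, (U ω - ∫ ω', U ω' ∂Pr) * (V ω - ∫ ω', V ω' ∂Pr) ∂Pr

/-- Variance of a real random variable. -/
def rVar {Ω : Type*} [MeasurableSpace Ω] (Pr : Measure Ω) (U : Ω → ℝ) : ℝ :=
  rCov Pr U U

/-- Pearson correlation of two real random variables. -/
def rCorr {Ω : Type*} [MeasurableSpace Ω] (Pr : Measure Ω) (U V : Ω → ℝ) : ℝ :=
  rCov Pr U V / (Real.sqrt (rVar Pr U) * Real.sqrt (rVar Pr V))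

end

noncomputable section

/-- A probability density kernel `f : Y × X → [0,1]` with respect to the reference
measure `ν` on `Y`. -/
structure IsDensityKernel {Y X : Type*} [MeasurableSpace Y] [MeasurableSpace X]
    (ν : Measure Y) (f : Y → X → ℝ) : Prop where
  measurable : Measurable (Function.uncurry f)
  nonneg : ∀ y x, 0 ≤ f y x
  le_one : ∀ y x, f y x ≤ 1
  integral_one : ∀ x, ∫ y, f y x ∂ν = 1

/-- The mixture density `f_P(y) = ∫ f(y;x) dP(x)`. -/
def mixDensity {Y X : Type*} [MeasurableSpace X] (f : Y → X → ℝ) (P : Measure X) :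
    Y → ℝ := fun y => ∫ x, f y x ∂P

/-- The mixture measure on `Y` with density `f_P` with respect to `ν`. -/
def mixMeasure {Y X : Type*} [MeasurableSpace Y] [MeasurableSpace X]
    (ν : Measure Y) (f : Y → X → ℝ) (P : Measure X) : Measure Y :=
  ν.withDensity fun y => ENNReal.ofReal (mixDensity f P y)

/-- The updated kernel `k_f(x₁,x₂) = ∬ k(y₁,y₂) f(y₁;x₁) f(y₂;x₂) dy₁ dy₂`. -/
def updatedKernel {Y X : Type*} [MeasurableSpace Y] (ν : Measure Y)
    (k : Y → Y → ℝ) (f : Y → X → ℝ) : X → X → ℝ := fun x₁ x₂ =>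
  ∫ y₁, ∫ y₂, k y₁ y₂ * f y₁ x₁ * f y₂ x₂ ∂ν ∂ν

/-- The family `{f(·;x)}ₓ` is identifiable: mixtures determine the mixing measure. -/
def Identifiable {Y X : Type*} [MeasurableSpace Y] [MeasurableSpace X]
    (ν : Measure Y) (f : Y → X → ℝ) : Prop :=
  ∀ P₁ P₂ : Measure X, IsProbabilityMeasure P₁ → IsProbabilityMeasure P₂ →
    mixDensity f P₁ =ᵐ[ν] mixDensity f P₂ → P₁ = P₂

/-- A kernel is characteristic if the kernel mean embedding
`μ ↦ (y ↦ ∫ k(x,y) dμ(x))` is injective on probability measures. -/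
def IsCharacteristic {Z : Type*} [MeasurableSpace Z] (k : Z → Z → ℝ) : Prop :=
  ∀ μ₁ μ₂ : Measure Z, IsProbabilityMeasure μ₁ → IsProbabilityMeasure μ₂ →
    (∀ y, ∫ x, k x y ∂μ₁ = ∫ x, k x y ∂μ₂) → μ₁ = μ₂

end

noncomputable section

/-- The Fourier transform `f̂(z;x) = ∫ e^{-i⟨z,y⟩} f(y;x) dy` of a probability density
kernel in its first argument. -/
def densityFourier {X : Type*} [MeasurableSpace X] {m : ℕ}
    (f : EuclideanSpace ℝ (Fin m) → X → ℝ)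
    (z : EuclideanSpace ℝ (Fin m)) (x : X) : ℂ :=
  ∫ y, Complex.exp (-(Complex.I * (⟪z, y⟫ : ℂ))) * (f y x : ℂ)

/-- A density kernel is integrable in its first argument: a non-integrable function would have
Bochner integral `0` instead of `1`. -/
theorem IsDensityKernel.integrable {Y X : Type*} [MeasurableSpace Y] [MeasurableSpace X]
    {ν : Measure Y} {f : Y → X → ℝ} (hf : IsDensityKernel ν f) (x : X) :
    Integrable (fun y => f y x) ν := by
  by_contra h
  have h1 := hf.integral_one x
  rw [integral_undef h] at h1
  exact zero_ne_one h1

theorem norm_exp_neg_I_mul (t : ℝ) : ‖Complex.exp (-(Complex.I * (t : ℂ)))‖ = 1 := by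
  rw [show -(Complex.I * (t : ℂ)) = ((-t : ℝ) : ℂ) * Complex.I by push_cast; ring]
  exact Complex.norm_exp_ofReal_mul_I _

theorem conj_exp_neg_I_mul (t : ℝ) :
    (starRingEnd ℂ) (Complex.exp (-(Complex.I * (t : ℂ)))) = Complex.exp (Complex.I * (t : ℂ)) := by
  rw [← Complex.exp_conj]
  simp

/-- Absolute convergence of the triple integral over `((y₁, y₂), w)`, which justifies exchanging
the order of integration. -/
theorem integrable_char_mul_density {X : Type*} [MeasurableSpace X] {m : ℕ}
    {f : EuclideanSpace ℝ (Fin m) → X → ℝ}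
    (hf : IsDensityKernel (volume : Measure (EuclideanSpace ℝ (Fin m))) f)
    (ν : Measure (EuclideanSpace ℝ (Fin m))) [IsProbabilityMeasure ν] (x₁ x₂ : X) :
    Integrable (fun q : (EuclideanSpace ℝ (Fin m) × EuclideanSpace ℝ (Fin m)) ×
        EuclideanSpace ℝ (Fin m) =>
      Complex.exp (-(Complex.I * (⟪q.1.1 - q.1.2, q.2⟫ : ℂ))) *
        ((f q.1.1 x₁ : ℂ) * (f q.1.2 x₂ : ℂ)))
      (((volume : Measure (EuclideanSpace ℝ (Fin m))).prod volume).prod ν) := by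
  have hff : Integrable (fun p : EuclideanSpace ℝ (Fin m) × EuclideanSpace ℝ (Fin m) =>
      (f p.1 x₁ : ℂ) * (f p.2 x₂ : ℂ))
      ((volume : Measure (EuclideanSpace ℝ (Fin m))).prod volume) :=
    (hf.integrable x₁).ofReal.mul_prod (hf.integrable x₂).ofReal
  refine (hff.comp_fst ν).bdd_mul (c := 1) ?_ (ae_of_all _ fun q => ?_)
  · exact Continuous.aestronglyMeasurable (by fun_prop)
  · exact (norm_exp_neg_I_mul _).le

theorem stmt_16
    {X : Type*} [TopologicalSpace X] [PolishSpace X] [LocallyCompactSpace X]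
    [MeasurableSpace X] [BorelSpace X]
    (m : ℕ)
    -- a translation-invariant kernel `k(y₁,y₂) = ψ(y₁ - y₂)` on `ℝ^m`
    (ψ : EuclideanSpace ℝ (Fin m) → ℝ)
    (hψcont : Continuous ψ) (hψpos : ∀ z, 0 < ψ z) (hψ0 : ψ 0 = 1)
    (hker : IsKernel fun y₁ y₂ : EuclideanSpace ℝ (Fin m) => ψ (y₁ - y₂))
    -- the probability measure `ν` with `ψ = ν̂` given by Bochner's theorem
    (ν : Measure (EuclideanSpace ℝ (Fin m))) [IsProbabilityMeasure ν]
    (hν : ∀ z, (ψ z : ℂ) = ∫ w, Complex.exp (-(Complex.I * (⟪z, w⟫ : ℂ))) ∂ν)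
    -- a probability density kernel with respect to Lebesgue measure
    (f : EuclideanSpace ℝ (Fin m) → X → ℝ)
    (hf : IsDensityKernel (volume : Measure (EuclideanSpace ℝ (Fin m))) f) :
    ∀ x₁ x₂ : X,
      (updatedKernel (volume : Measure (EuclideanSpace ℝ (Fin m)))
          (fun y₁ y₂ => ψ (y₁ - y₂)) f x₁ x₂ : ℂ)
        = ∫ z, densityFourier f z x₁ * (starRingEnd ℂ) (densityFourier f z x₂) ∂ν := by
  intro x₁ x₂
  have hG := integrable_char_mul_density hf ν x₁ x₂
  have hinner : ∀ p : EuclideanSpace ℝ (Fin m) × EuclideanSpace ℝ (Fin m),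
      ∫ w, Complex.exp (-(Complex.I * (⟪p.1 - p.2, w⟫ : ℂ))) *
        ((f p.1 x₁ : ℂ) * (f p.2 x₂ : ℂ)) ∂ν
        = ((ψ (p.1 - p.2) * f p.1 x₁ * f p.2 x₂ : ℝ) : ℂ) := by
    intro p
    rw [integral_mul_const, ← hν]
    push_cast
    ring
  have hint := hG.integral_prod_left
  simp only [hinner] at hint
  have hL : (updatedKernel (volume : Measure (EuclideanSpace ℝ (Fin m)))
      (fun y₁ y₂ => ψ (y₁ - y₂)) f x₁ x₂ : ℂ)
      = ∫ p : EuclideanSpace ℝ (Fin m) × EuclideanSpace ℝ (Fin m),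
          ((ψ (p.1 - p.2) * f p.1 x₁ * f p.2 x₂ : ℝ) : ℂ) ∂(volume.prod volume) := by
    rw [integral_prod _ hint]
    simp only [integral_complex_ofReal, updatedKernel]
  rw [hL]
  simp only [← hinner]
  rw [integral_integral_swap hG]
  refine integral_congr_ae (ae_of_all _ fun w => ?_)
  simp only [densityFourier]
  rw [← integral_conj, ← integral_prod_mul]
  refine integral_congr_ae (ae_of_all _ fun p => ?_)
  simp only [map_mul, Complex.conj_ofReal, conj_exp_neg_I_mul]
  rw [inner_sub_left, real_inner_comm w p.1, real_inner_comm w p.2, Complex.ofReal_sub,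
    show -(Complex.I * ((⟪w, p.1⟫ : ℂ) - (⟪w, p.2⟫ : ℂ)))
      = -(Complex.I * (⟪w, p.1⟫ : ℂ)) + Complex.I * (⟪w, p.2⟫ : ℂ) by ring, Complex.exp_add]
  ring

end
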